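/- arXiv:1704.08987 — 2 statements merged into one kernel-verified Lean document; each statement's English description precedes it below -/
import Mathlib

section
/- Let (X, d) be a metric space, A a nonempty closed subset of X, and define d_A†(u, v) := min( d(u, v), dist(u, A) + dist(v, A) ), where dist(u, A) := inf_{a∈A} d(u, a). Let x, y ∈ X \ A and assume there exists a geodesic from x to y avoiding A, i.e. a map f : [0, d(x, y)] → X with f(0) = x, f(d(x, y)) = y, d(f(s), f(t)) = |s − t| for all s, t ∈ [0, d(x, y)], and with image f([0, d(x, y)]) disjoint from A. Then d(x, y) equals the infimum, over all integers p ≥ 1 and all finite chains y₀ = x, y₁, …, y_p = y of points of X satisfying d_A†(y_{i−1}, y_i) < dist(y_{i−1}, A) + dist(y_i, A) for every 1 ≤ i ≤ p, of the sums ∑_{i=1}^p d_A†(y_{i−1}, y_i). -/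
/-- Recovering the original distance from the glued-boundary pseudometric: if `x, y ∉ A` are
joined by a geodesic avoiding the closed set `A`, then `dist x y` equals the infimum of the sums
`∑ d'(c i, c (i+1))` over all finite chains from `x` to `y` whose consecutive points satisfy
`d'(c i, c (i+1)) < infDist (c i) A + infDist (c (i+1)) A`, where
`d'(u,v) = min (dist u v) (infDist u A + infDist v A)`. -/
theorem dist_eq_sInf_chains_glued
    {X : Type*} [MetricSpace X] (A : Set X) (hA : A.Nonempty) (hAc : IsClosed A)
    (d' : X → X → ℝ)
    (hd' : ∀ u v, d' u v = min (dist u v) (Metric.infDist u A + Metric.infDist v A))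
    (x y : X) (hx : x ∉ A) (hy : y ∉ A)
    (f : ℝ → X) (hf0 : f 0 = x) (hf1 : f (dist x y) = y)
    (hiso : ∀ s ∈ Set.Icc (0:ℝ) (dist x y), ∀ t ∈ Set.Icc (0:ℝ) (dist x y),
      dist (f s) (f t) = |s - t|)
    (havoid : ∀ t ∈ Set.Icc (0:ℝ) (dist x y), f t ∉ A) :
    dist x y = sInf {s : ℝ | ∃ p : ℕ, 1 ≤ p ∧ ∃ c : ℕ → X, c 0 = x ∧ c p = y ∧
      (∀ i < p, d' (c i) (c (i+1)) < Metric.infDist (c i) A + Metric.infDist (c (i+1)) A) ∧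
      s = ∑ i ∈ Finset.range p, d' (c i) (c (i+1))} := by
  have hD : (0:ℝ) ≤ dist x y := dist_nonneg
  have hcont : ContinuousOn f (Set.Icc (0:ℝ) (dist x y)) := by
    apply LipschitzOnWith.continuousOn (K := 1)
    apply LipschitzOnWith.of_dist_le_mul
    intro s hs t ht
    rw [hiso s hs t ht, Real.dist_eq]
    simp
  have hcont2 : ContinuousOn (fun t => Metric.infDist (f t) A) (Set.Icc (0:ℝ) (dist x y)) :=
    (Metric.continuous_infDist_pt A).comp_continuousOn hcont
  obtain ⟨t0, ht0, hmin⟩ := isCompact_Icc.exists_isMinOn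
    (Set.nonempty_Icc.mpr hD) hcont2
  have hm : 0 < Metric.infDist (f t0) A :=
    (hAc.notMem_iff_infDist_pos hA).1 (havoid t0 ht0)
  have hmle : ∀ t ∈ Set.Icc (0:ℝ) (dist x y),
      Metric.infDist (f t0) A ≤ Metric.infDist (f t) A := fun t ht => hmin ht
  obtain ⟨n, hn⟩ := exists_nat_gt (dist x y / Metric.infDist (f t0) A)
  symm
  apply IsLeast.csInf_eq
  constructor
  · have hp : (0:ℝ) < ((n + 1 : ℕ) : ℝ) := by positivity
    have hstep : dist x y / ((n + 1 : ℕ) : ℝ) < Metric.infDist (f t0) A := by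
      rw [div_lt_iff₀ hm] at hn
      rw [div_lt_iff₀ hp]
      push_cast
      nlinarith
    have hmem : ∀ i : ℕ, i ≤ n + 1 →
        (i : ℝ) * (dist x y / ((n + 1 : ℕ) : ℝ)) ∈ Set.Icc (0:ℝ) (dist x y) := by
      intro i hi
      have hi' : (i : ℝ) ≤ ((n + 1 : ℕ) : ℝ) := by exact_mod_cast hi
      refine ⟨by positivity, ?_⟩
      calc (i : ℝ) * (dist x y / ((n + 1 : ℕ) : ℝ))
          ≤ ((n + 1 : ℕ) : ℝ) * (dist x y / ((n + 1 : ℕ) : ℝ)) := by gcongr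
        _ = dist x y := by field_simp
    have hdist : ∀ i < n + 1, dist (f ((i : ℝ) * (dist x y / ((n + 1 : ℕ) : ℝ))))
        (f (((i + 1 : ℕ) : ℝ) * (dist x y / ((n + 1 : ℕ) : ℝ))))
          = dist x y / ((n + 1 : ℕ) : ℝ) := by
      intro i hi
      rw [hiso _ (hmem i hi.le) _ (hmem (i + 1) hi), abs_sub_comm, Nat.cast_succ i,
        add_mul, one_mul, add_sub_cancel_left, abs_of_nonneg (by positivity)]
    have hlt : ∀ i < n + 1, dist x y / ((n + 1 : ℕ) : ℝ) <
        Metric.infDist (f ((i : ℝ) * (dist x y / ((n + 1 : ℕ) : ℝ)))) A +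
        Metric.infDist (f (((i + 1 : ℕ) : ℝ) * (dist x y / ((n + 1 : ℕ) : ℝ)))) A := by
      intro i hi
      have h1 := hmle _ (hmem i hi.le)
      have h2 := hmle _ (hmem (i + 1) hi)
      linarith
    have hdd : ∀ i < n + 1, d' (f ((i : ℝ) * (dist x y / ((n + 1 : ℕ) : ℝ))))
        (f (((i + 1 : ℕ) : ℝ) * (dist x y / ((n + 1 : ℕ) : ℝ))))
          = dist x y / ((n + 1 : ℕ) : ℝ) := by
      intro i hi
      rw [hd', hdist i hi, min_eq_left (hlt i hi).le]
    refine ⟨n + 1, by omega, fun i => f ((i : ℝ) * (dist x y / ((n + 1 : ℕ) : ℝ))),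
      ?_, ?_, ?_, ?_⟩
    · simp [hf0]
    · have : ((n + 1 : ℕ) : ℝ) * (dist x y / ((n + 1 : ℕ) : ℝ)) = dist x y := by field_simp
      simp only [this, hf1]
    · intro i hi
      show d' _ _ < _
      rw [hdd i hi]
      exact hlt i hi
    · rw [Finset.sum_congr rfl (fun i hi => hdd i (Finset.mem_range.1 hi))]
      rw [Finset.sum_const, Finset.card_range, nsmul_eq_mul]
      field_simp
  · rintro s ⟨p, -, c, h0, hpy, hc, rfl⟩
    rw [← h0, ← hpy]
    refine (dist_le_range_sum_dist c p).trans (Finset.sum_le_sum fun i hi => ?_)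
    have h := hc i (Finset.mem_range.1 hi)
    rw [hd'] at h ⊢
    rcases min_lt_iff.1 h with h | h
    · rw [min_eq_left h.le]
    · exact absurd h (lt_irrefl _)
end

section
/- In the multiplicative-cascade setting below, assume m < 1/2. Then, P-almost surely, the supremum over all infinite sequences u ∈ {1, 2}^ℕ of the tail sums ∑_{k=ℓ}^∞ Z_{[u]_k} tends to 0 as ℓ → ∞, where [u]_k denotes the length-k prefix of u and the sums are taken in [0, ∞]. -/
open MeasureTheory Filter ENNReal

theorem cascade_det (z : List (Fin 2) → ℝ≥0∞) (c : ℝ≥0∞) (hc : 1 < c) (hc' : c ≠ ∞)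
    (hS : ∑' k : ℕ, c ^ k * ∑ v : Fin k → Fin 2, z (List.ofFn v) ^ ((5 : ℝ) / 2) < ∞) :
    Tendsto (fun ℓ : ℕ => ⨆ u : ℕ → Fin 2, ∑' k : ℕ,
        if ℓ ≤ k then z (List.ofFn fun i : Fin k => u i) else 0) atTop (nhds 0) := by
  set S := ∑' k : ℕ, c ^ k * ∑ v : Fin k → Fin 2, z (List.ofFn v) ^ ((5 : ℝ) / 2) with hSdef
  set q : ℝ≥0∞ := (c⁻¹) ^ ((2 : ℝ) / 5) with hq
  have hq1 : q < 1 := ENNReal.rpow_lt_one (ENNReal.inv_lt_one.2 hc) (by norm_num)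
  have hc0 : c ≠ 0 := (zero_lt_one.trans hc).ne'
  have key : ∀ (k : ℕ) (v : Fin k → Fin 2),
      z (List.ofFn v) ≤ S ^ ((2 : ℝ) / 5) * q ^ k := by
    intro k v
    have h1 : c ^ k * z (List.ofFn v) ^ ((5 : ℝ) / 2) ≤ S := by
      refine le_trans ?_ (ENNReal.le_tsum k)
      gcongr
      exact Finset.single_le_sum (f := fun v : Fin k → Fin 2 => z (List.ofFn v) ^ ((5 : ℝ) / 2))
        (fun _ _ => zero_le) (Finset.mem_univ v)
    have h2 : z (List.ofFn v) ^ ((5 : ℝ) / 2) ≤ S * (c⁻¹) ^ k := by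
      rw [← ENNReal.inv_pow, ← div_eq_mul_inv]
      rw [ENNReal.le_div_iff_mul_le (Or.inl (pow_ne_zero _ hc0)) (Or.inl (ENNReal.pow_ne_top hc'))]
      rwa [mul_comm]
    have h3 := ENNReal.rpow_le_rpow h2 (z := (2 : ℝ) / 5) (by norm_num)
    rw [← ENNReal.rpow_mul, ENNReal.mul_rpow_of_nonneg _ _ (by norm_num)] at h3
    norm_num at h3
    refine h3.trans (le_of_eq ?_)
    rw [hq, ← ENNReal.rpow_natCast, ← ENNReal.rpow_natCast, ← ENNReal.rpow_mul, 
      ← ENNReal.rpow_mul, mul_comm (k : ℝ)]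
  set K := S ^ ((2 : ℝ) / 5)
  have hK : K ≠ ∞ := ENNReal.rpow_ne_top_of_nonneg (by norm_num) hS.ne
  have hsum : ∑' k, K * q ^ k ≠ ∞ := by
    rw [ENNReal.tsum_mul_left, ENNReal.tsum_geometric]
    exact ENNReal.mul_ne_top hK (ENNReal.inv_ne_top.2 (tsub_pos_of_lt hq1).ne')
  refine tendsto_of_tendsto_of_tendsto_of_le_of_le tendsto_const_nhds
    (ENNReal.tendsto_sum_nat_add _ hsum) (fun _ => zero_le) ?_
  intro l
  refine iSup_le fun u => ?_
  rw [← ENNReal.summable.sum_add_tsum_nat_add' (k := l)]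
  rw [Finset.sum_eq_zero, zero_add]
  · refine ENNReal.tsum_le_tsum fun k => ?_
    simp only [le_add_iff_nonneg_left, zero_le, if_true]
    exact key _ _
  · intro i hi
    rw [if_neg]
    simpa using hi

/-- Multiplicative cascade tail-sum estimate: with `(ξ w)` i.i.d. nonnegative random variables
indexed by finite words on `{1,2}`, `m = E[ξ_∅^{5/2}] < 1/2`, and `Z w` the product of the `ξ`
over the prefixes of `w`, almost surely the supremum over all infinite sequences
`u ∈ {1,2}^ℕ` of the tail sums `∑_{k ≥ ℓ} Z([u]_k)` (taken in `[0,∞]`) tends to `0` as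
`ℓ → ∞`. -/
theorem cascade_tail_sums_tendsto_zero
    {Ω : Type*} [MeasurableSpace Ω] (P : Measure Ω) [IsProbabilityMeasure P]
    (ξ : List (Fin 2) → Ω → ℝ)
    (hnonneg : ∀ w ω, 0 ≤ ξ w ω)
    (hmeas : ∀ w, Measurable (ξ w))
    (hindep : ProbabilityTheory.iIndepFun ξ P)
    (hident : ∀ w : List (Fin 2), P.map (ξ w) = P.map (ξ []))
    (hint : Integrable (fun ω => ξ [] ω ^ ((5 : ℝ) / 2)) P)
    (m : ℝ) (hm : m = ∫ ω, ξ [] ω ^ ((5 : ℝ) / 2) ∂P)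
    (Z : List (Fin 2) → Ω → ℝ)
    (hZ : ∀ w ω, Z w ω = ∏ k ∈ Finset.range (w.length + 1), ξ (w.take k) ω)
    (hm12 : m < 1 / 2) :
    ∀ᵐ ω ∂P, Tendsto
      (fun ℓ : ℕ => ⨆ u : ℕ → Fin 2, ∑' k : ℕ,
        if ℓ ≤ k then ENNReal.ofReal (Z (List.ofFn fun i : Fin k => u i) ω) else 0)
      atTop (nhds 0) := by
  set p : ℝ := (5 : ℝ) / 2 with hp
  have hp0 : 0 ≤ p := by norm_num [hp]
  have hm0 : 0 ≤ m := by
    rw [hm]; exact integral_nonneg fun ω => Real.rpow_nonneg (hnonneg _ _) _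
  have hmom : ∀ w, ∫⁻ ω, ENNReal.ofReal (ξ w ω) ^ p ∂P = ENNReal.ofReal m := by
    have hg : Measurable (fun x : ℝ => ENNReal.ofReal x ^ p) := by fun_prop
    intro w
    have e : ∀ w, ∫⁻ ω, ENNReal.ofReal (ξ w ω) ^ p ∂P
        = ∫⁻ x, ENNReal.ofReal x ^ p ∂(P.map (ξ w)) :=
      fun w => (lintegral_map hg (hmeas w)).symm
    rw [e, hident, ← e, hm, ofReal_integral_eq_lintegral_ofReal hint
      (Eventually.of_forall fun ω => Real.rpow_nonneg (hnonneg _ _) _)]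
    exact lintegral_congr fun ω => ENNReal.ofReal_rpow_of_nonneg (hnonneg _ _) hp0
  have hZmeas : ∀ w, Measurable (Z w) := by
    intro w
    rw [show Z w = fun ω => _ from funext (hZ w)]
    exact Finset.measurable_fun_prod _ fun i _ => hmeas _
  have hZmom : ∀ w, ∫⁻ ω, ENNReal.ofReal (Z w ω) ^ p ∂P
      = ENNReal.ofReal m ^ (w.length + 1) := by
    intro w
    have hinj : Function.Injective (fun k : Fin (w.length + 1) => w.take k) := by
      intro a b hab
      have := congrArg List.length hab
      simp only [List.length_take] at this
      ext; omega
    have hi := (hindep.precomp hinj).comp (fun _ x => ENNReal.ofReal x ^ p)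
      (fun _ => by fun_prop)
    have h := ProbabilityTheory.lintegral_prod_eq_prod_lintegral_of_indepFun Finset.univ _ hi
      (fun i => by have := hmeas (w.take i); simp only [Function.comp_def]; fun_prop)
    simp only [Function.comp_def, hmom, Finset.prod_const, Finset.card_univ, Fintype.card_fin] at h
    rw [← h]
    refine lintegral_congr fun ω => ?_
    rw [hZ, ENNReal.ofReal_prod_of_nonneg (fun _ _ => hnonneg _ _),
      ← ENNReal.prod_rpow_of_nonneg hp0,
      Finset.prod_range (fun k => ENNReal.ofReal (ξ (w.take k) ω) ^ p)]
  set c : ℝ := 2 / (1 + 2 * m) with hc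
  have hc1 : 1 < c := by rw [hc, lt_div_iff₀ (by linarith)]; linarith
  have hcm : c * (2 * m) < 1 := by
    rw [hc, div_mul_eq_mul_div, div_lt_one (by linarith)]; linarith
  have hI : ∫⁻ ω, ∑' k : ℕ, ENNReal.ofReal c ^ k *
      ∑ v : Fin k → Fin 2, ENNReal.ofReal (Z (List.ofFn v) ω) ^ p ∂P ≠ ∞ := by
    rw [lintegral_tsum (fun k => by fun_prop)]
    have : ∀ k : ℕ, ∫⁻ ω, ENNReal.ofReal c ^ k *
        ∑ v : Fin k → Fin 2, ENNReal.ofReal (Z (List.ofFn v) ω) ^ p ∂P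
        = ENNReal.ofReal m * ENNReal.ofReal (c * (2 * m)) ^ k := by
      intro k
      rw [lintegral_const_mul _ (by fun_prop), lintegral_finsetSum _ (fun v _ => by fun_prop)]
      simp only [hZmom, List.length_ofFn, Finset.sum_const, Finset.card_univ, Fintype.card_fun,
        Fintype.card_fin, nsmul_eq_mul]
      rw [ENNReal.ofReal_mul (by linarith), ENNReal.ofReal_mul (by norm_num)]
      push_cast
      rw [ENNReal.ofReal_ofNat]
      ring
    simp_rw [this]
    rw [ENNReal.tsum_mul_left, ENNReal.tsum_geometric]
    refine ENNReal.mul_ne_top ENNReal.ofReal_ne_top (ENNReal.inv_ne_top.2 (tsub_pos_of_lt ?_).ne')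
    exact ENNReal.ofReal_lt_one.2 hcm
  filter_upwards [ae_lt_top (by fun_prop) hI] with ω hω
  exact cascade_det (fun w => ENNReal.ofReal (Z w ω)) (ENNReal.ofReal c)
    (by simpa using hc1) ENNReal.ofReal_ne_top hω
end
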